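/- Consider the 90 multilinear degree-5 monomials in the trilinear operation (·,·,·) on M, namely the functions M⁵ → M of the forms ((x_{σ(1)},x_{σ(2)},x_{σ(3)}),x_{σ(4)},x_{σ(5)}) and (x_{σ(1)},x_{σ(2)},(x_{σ(3)},x_{σ(4)},x_{σ(5)})) for permutations σ of {1,…,5}, taken in normal form with respect to the skew-symmetry of (·,·,·) in its first two arguments (60 monomials of the first type and 30 of the second type). The subspace of coefficient vectors in ℂ⁹⁰ whose corresponding linear combination vanishes identically on M⁵ has dimension 30, and it is spanned by the coefficient vectors of the permuted ternary derivation identities ((σa,σb,σc),σd,σe) − ((σa,σb,σd),σc,σe) − (σa,σb,(σc,σd,σe)) + (σc,σd,(σa,σb,σe)) for permutations σ of the variables a, b, c, d, e. -/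

import Mathlib

/-!
The operation is `(x,y,z) = β(x,y)·z` with `β : M × M → sl(2,ℂ)` equivariant, so `E`, `H`, `F`, and with
them all maps `(a,b,·)`, are derivations of it (`tri_deriv`). Together with skew-symmetry this is the
ternary derivation identity, and hence every permuted identity lies in the kernel (`gens_mem_ker`).

The identities with `σa < σb` and `σc < σd` are thirty in number, and each of them contains a monomial
`((σa,σb,σc),σd,σe)` found in none of the others. They are therefore linearly independent
(`linearIndependent_gens`), and the span of the identities has dimension at least 30.

It remains to see that the kernel has dimension at most 30. On weight vectors every monomial takes a
value that is an integer multiple of one weight vector, so each choice of five weight vectors gives an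
integral linear equation on the kernel. Combining a few of these equations (one for each remaining
monomial `((·,·,·),·,·)`, seven for each monomial `(·,·,(·,·,·))`) shows that an element of the kernel
whose thirty leading coordinates vanish is zero (`eq_zero_of_lead`). Thus restriction to the leading
coordinates is injective on the kernel, and the span of the identities is the whole kernel.
-/

set_option maxHeartbeats 2000000
set_option synthInstance.maxHeartbeats 400000
noncomputable section

/-- The 7-dimensional complex vector space `M` with basis
`v₆, v₄, v₂, v₀, v₋₂, v₋₄, v₋₆` (coordinates indexed by `Fin 7` in this order). -/
abbrev M7 : Type := Fin 7 → ℂ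

/-- The 2×2 minor `x_p y_q - x_q y_p`. -/
def dd (x y : M7) (p q : Fin 7) : ℂ := x p * y q - x q * y p

/-- Action of `H` on `M = V(6)`: `H·v_k = k v_k`. -/
def Hm (x : M7) : M7 := ![6 * x 0, 4 * x 1, 2 * x 2, 0, -2 * x 4, -4 * x 5, -6 * x 6]

/-- Action of `E` on `M = V(6)`: `E·v₆ = 0`, `E·v₄ = 6v₆`, `E·v₂ = 5v₄`, `E·v₀ = 4v₂`,
`E·v₋₂ = 3v₀`, `E·v₋₄ = 2v₋₂`, `E·v₋₆ = v₋₄`. -/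
def Em (x : M7) : M7 := ![6 * x 1, 5 * x 2, 4 * x 3, 3 * x 4, 2 * x 5, x 6, 0]

/-- Action of `F` on `M = V(6)`: `F·v₆ = v₄`, `F·v₄ = 2v₂`, `F·v₂ = 3v₀`, `F·v₀ = 4v₋₂`,
`F·v₋₂ = 5v₋₄`, `F·v₋₄ = 6v₋₆`, `F·v₋₆ = 0`. -/
def Fm (x : M7) : M7 := ![0, x 0, 2 * x 1, 3 * x 2, 4 * x 3, 5 * x 4, 6 * x 5]

/-- Coefficient of `E` in `β(x,y)` (here `u₂ = −E`, so e.g. `β(v₆,v₋₄) = 2u₂ = −2E`). -/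
def cE (x y : M7) : ℂ := -2 * dd x y 0 5 + 10 * dd x y 1 4 - 20 * dd x y 2 3

/-- Coefficient of `H` in `β(x,y)` (here `u₀ = H`). -/
def cH (x y : M7) : ℂ := dd x y 0 6 - 4 * dd x y 1 5 + 5 * dd x y 2 4

/-- Coefficient of `F` in `β(x,y)` (here `u₋₂ = F`). -/
def cF (x y : M7) : ℂ := 2 * dd x y 1 6 - 10 * dd x y 2 5 + 20 * dd x y 3 4

/-- The trilinear operation `(x,y,z) = β(x,y)·z`, where `β(x,y) = cE x y • E + cH x y • H + cF x y • F ∈ sl(2,ℂ)`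
acts on `z ∈ M` via the `sl(2,ℂ)`-action `Em, Hm, Fm`. -/
def tri (x y z : M7) : M7 := cE x y • Em z + cH x y • Hm z + cF x y • Fm z

/-- The 90 multilinear degree-5 monomials in the trilinear operation `(·,·,·)` on `M`,
in normal form with respect to the skew-symmetry in the first two arguments:
the 60 monomials `((x_i, x_j, x_k), x_l, x_m)` with `i < j`, followed by the
30 monomials `(x_i, x_j, (x_k, x_l, x_m))` with `i < j` and `k < l`. -/
def mono18 : Fin 90 → (M7 → M7 → M7 → M7 → M7 → M7) :=
  ![fun a b c d e => tri (tri a b c) d e,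
    fun a b c d e => tri (tri a b c) e d,
    fun a b c d e => tri (tri a b d) c e,
    fun a b c d e => tri (tri a b d) e c,
    fun a b c d e => tri (tri a b e) c d,
    fun a b c d e => tri (tri a b e) d c,
    fun a b c d e => tri (tri a c b) d e,
    fun a b c d e => tri (tri a c b) e d,
    fun a b c d e => tri (tri a c d) b e,
    fun a b c d e => tri (tri a c d) e b,
    fun a b c d e => tri (tri a c e) b d,
    fun a b c d e => tri (tri a c e) d b,
    fun a b c d e => tri (tri a d b) c e,
    fun a b c d e => tri (tri a d b) e c,
    fun a b c d e => tri (tri a d c) b e,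
    fun a b c d e => tri (tri a d c) e b,
    fun a b c d e => tri (tri a d e) b c,
    fun a b c d e => tri (tri a d e) c b,
    fun a b c d e => tri (tri a e b) c d,
    fun a b c d e => tri (tri a e b) d c,
    fun a b c d e => tri (tri a e c) b d,
    fun a b c d e => tri (tri a e c) d b,
    fun a b c d e => tri (tri a e d) b c,
    fun a b c d e => tri (tri a e d) c b,
    fun a b c d e => tri (tri b c a) d e,
    fun a b c d e => tri (tri b c a) e d,
    fun a b c d e => tri (tri b c d) a e,
    fun a b c d e => tri (tri b c d) e a,
    fun a b c d e => tri (tri b c e) a d,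
    fun a b c d e => tri (tri b c e) d a,
    fun a b c d e => tri (tri b d a) c e,
    fun a b c d e => tri (tri b d a) e c,
    fun a b c d e => tri (tri b d c) a e,
    fun a b c d e => tri (tri b d c) e a,
    fun a b c d e => tri (tri b d e) a c,
    fun a b c d e => tri (tri b d e) c a,
    fun a b c d e => tri (tri b e a) c d,
    fun a b c d e => tri (tri b e a) d c,
    fun a b c d e => tri (tri b e c) a d,
    fun a b c d e => tri (tri b e c) d a,
    fun a b c d e => tri (tri b e d) a c,
    fun a b c d e => tri (tri b e d) c a,
    fun a b c d e => tri (tri c d a) b e,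
    fun a b c d e => tri (tri c d a) e b,
    fun a b c d e => tri (tri c d b) a e,
    fun a b c d e => tri (tri c d b) e a,
    fun a b c d e => tri (tri c d e) a b,
    fun a b c d e => tri (tri c d e) b a,
    fun a b c d e => tri (tri c e a) b d,
    fun a b c d e => tri (tri c e a) d b,
    fun a b c d e => tri (tri c e b) a d,
    fun a b c d e => tri (tri c e b) d a,
    fun a b c d e => tri (tri c e d) a b,
    fun a b c d e => tri (tri c e d) b a,
    fun a b c d e => tri (tri d e a) b c,
    fun a b c d e => tri (tri d e a) c b,
    fun a b c d e => tri (tri d e b) a c,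
    fun a b c d e => tri (tri d e b) c a,
    fun a b c d e => tri (tri d e c) a b,
    fun a b c d e => tri (tri d e c) b a,
    fun a b c d e => tri a b (tri c d e),
    fun a b c d e => tri a b (tri c e d),
    fun a b c d e => tri a b (tri d e c),
    fun a b c d e => tri a c (tri b d e),
    fun a b c d e => tri a c (tri b e d),
    fun a b c d e => tri a c (tri d e b),
    fun a b c d e => tri a d (tri b c e),
    fun a b c d e => tri a d (tri b e c),
    fun a b c d e => tri a d (tri c e b),
    fun a b c d e => tri a e (tri b c d),
    fun a b c d e => tri a e (tri b d c),
    fun a b c d e => tri a e (tri c d b),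
    fun a b c d e => tri b c (tri a d e),
    fun a b c d e => tri b c (tri a e d),
    fun a b c d e => tri b c (tri d e a),
    fun a b c d e => tri b d (tri a c e),
    fun a b c d e => tri b d (tri a e c),
    fun a b c d e => tri b d (tri c e a),
    fun a b c d e => tri b e (tri a c d),
    fun a b c d e => tri b e (tri a d c),
    fun a b c d e => tri b e (tri c d a),
    fun a b c d e => tri c d (tri a b e),
    fun a b c d e => tri c d (tri a e b),
    fun a b c d e => tri c d (tri b e a),
    fun a b c d e => tri c e (tri a b d),
    fun a b c d e => tri c e (tri a d b),
    fun a b c d e => tri c e (tri b d a),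
    fun a b c d e => tri d e (tri a b c),
    fun a b c d e => tri d e (tri a c b),
    fun a b c d e => tri d e (tri b c a)]

/-- The linear map sending a coefficient vector `λ ∈ ℂ⁹⁰` to the multilinear function
`(a,b,c,d,e) ↦ Σ_i λ_i (monomial i)(a,b,c,d,e)`. -/
def Phi18 : (Fin 90 → ℂ) →ₗ[ℂ] (M7 → M7 → M7 → M7 → M7 → M7) :=
  ∑ i : Fin 90, (LinearMap.proj i : (Fin 90 → ℂ) →ₗ[ℂ] ℂ).smulRight (mono18 i)

/-- Indices of the four nonzero coefficients of each of the 120 permuted ternary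
derivation identities
`((σa,σb,σc),σd,σe) − ((σa,σb,σd),σc,σe) − (σa,σb,(σc,σd,σe)) + (σc,σd,(σa,σb,σe))`,
written in normal form with respect to the 90 monomials. -/
def gIdx18 : Fin 120 → Fin 4 → Fin 90 :=
  ![![0, 2, 60, 81],
    ![1, 4, 61, 84],
    ![2, 0, 60, 81],
    ![3, 5, 62, 87],
    ![4, 1, 61, 84],
    ![5, 3, 62, 87],
    ![6, 8, 63, 75],
    ![7, 10, 64, 78],
    ![8, 6, 63, 75],
    ![9, 11, 65, 88],
    ![10, 7, 64, 78],
    ![11, 9, 65, 88],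
    ![12, 14, 66, 72],
    ![13, 16, 67, 79],
    ![14, 12, 66, 72],
    ![15, 17, 68, 85],
    ![16, 13, 67, 79],
    ![17, 15, 68, 85],
    ![18, 20, 69, 73],
    ![19, 22, 70, 76],
    ![20, 18, 69, 73],
    ![21, 23, 71, 82],
    ![22, 19, 70, 76],
    ![23, 21, 71, 82],
    ![0, 2, 60, 81],
    ![1, 4, 61, 84],
    ![2, 0, 60, 81],
    ![3, 5, 62, 87],
    ![4, 1, 61, 84],
    ![5, 3, 62, 87],
    ![24, 26, 72, 66],
    ![25, 28, 73, 69],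
    ![26, 24, 72, 66],
    ![27, 29, 74, 89],
    ![28, 25, 73, 69],
    ![29, 27, 74, 89],
    ![30, 32, 75, 63],
    ![31, 34, 76, 70],
    ![32, 30, 75, 63],
    ![33, 35, 77, 86],
    ![34, 31, 76, 70],
    ![35, 33, 77, 86],
    ![36, 38, 78, 64],
    ![37, 40, 79, 67],
    ![38, 36, 78, 64],
    ![39, 41, 80, 83],
    ![40, 37, 79, 67],
    ![41, 39, 80, 83],
    ![6, 8, 63, 75],
    ![7, 10, 64, 78],
    ![8, 6, 63, 75],
    ![9, 11, 65, 88],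
    ![10, 7, 64, 78],
    ![11, 9, 65, 88],
    ![24, 26, 72, 66],
    ![25, 28, 73, 69],
    ![26, 24, 72, 66],
    ![27, 29, 74, 89],
    ![28, 25, 73, 69],
    ![29, 27, 74, 89],
    ![42, 44, 81, 60],
    ![43, 46, 82, 71],
    ![44, 42, 81, 60],
    ![45, 47, 83, 80],
    ![46, 43, 82, 71],
    ![47, 45, 83, 80],
    ![48, 50, 84, 61],
    ![49, 52, 85, 68],
    ![50, 48, 84, 61],
    ![51, 53, 86, 77],
    ![52, 49, 85, 68],
    ![53, 51, 86, 77],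
    ![12, 14, 66, 72],
    ![13, 16, 67, 79],
    ![14, 12, 66, 72],
    ![15, 17, 68, 85],
    ![16, 13, 67, 79],
    ![17, 15, 68, 85],
    ![30, 32, 75, 63],
    ![31, 34, 76, 70],
    ![32, 30, 75, 63],
    ![33, 35, 77, 86],
    ![34, 31, 76, 70],
    ![35, 33, 77, 86],
    ![42, 44, 81, 60],
    ![43, 46, 82, 71],
    ![44, 42, 81, 60],
    ![45, 47, 83, 80],
    ![46, 43, 82, 71],
    ![47, 45, 83, 80],
    ![54, 56, 87, 62],
    ![55, 58, 88, 65],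
    ![56, 54, 87, 62],
    ![57, 59, 89, 74],
    ![58, 55, 88, 65],
    ![59, 57, 89, 74],
    ![18, 20, 69, 73],
    ![19, 22, 70, 76],
    ![20, 18, 69, 73],
    ![21, 23, 71, 82],
    ![22, 19, 70, 76],
    ![23, 21, 71, 82],
    ![36, 38, 78, 64],
    ![37, 40, 79, 67],
    ![38, 36, 78, 64],
    ![39, 41, 80, 83],
    ![40, 37, 79, 67],
    ![41, 39, 80, 83],
    ![48, 50, 84, 61],
    ![49, 52, 85, 68],
    ![50, 48, 84, 61],
    ![51, 53, 86, 77],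
    ![52, 49, 85, 68],
    ![53, 51, 86, 77],
    ![54, 56, 87, 62],
    ![55, 58, 88, 65],
    ![56, 54, 87, 62],
    ![57, 59, 89, 74],
    ![58, 55, 88, 65],
    ![59, 57, 89, 74]]

/-- The corresponding four signed coefficients of each permuted ternary derivation identity. -/
def gSgn18 : Fin 120 → Fin 4 → ℂ :=
  ![![1, -1, -1, 1],
    ![1, -1, -1, 1],
    ![1, -1, 1, -1],
    ![1, -1, -1, 1],
    ![1, -1, 1, -1],
    ![1, -1, 1, -1],
    ![1, -1, -1, 1],
    ![1, -1, -1, 1],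
    ![1, -1, 1, -1],
    ![1, -1, -1, 1],
    ![1, -1, 1, -1],
    ![1, -1, 1, -1],
    ![1, -1, -1, 1],
    ![1, -1, -1, 1],
    ![1, -1, 1, -1],
    ![1, -1, -1, 1],
    ![1, -1, 1, -1],
    ![1, -1, 1, -1],
    ![1, -1, -1, 1],
    ![1, -1, -1, 1],
    ![1, -1, 1, -1],
    ![1, -1, -1, 1],
    ![1, -1, 1, -1],
    ![1, -1, 1, -1],
    ![-1, 1, 1, -1],
    ![-1, 1, 1, -1],
    ![-1, 1, -1, 1],
    ![-1, 1, 1, -1],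
    ![-1, 1, -1, 1],
    ![-1, 1, -1, 1],
    ![1, -1, -1, 1],
    ![1, -1, -1, 1],
    ![1, -1, 1, -1],
    ![1, -1, -1, 1],
    ![1, -1, 1, -1],
    ![1, -1, 1, -1],
    ![1, -1, -1, 1],
    ![1, -1, -1, 1],
    ![1, -1, 1, -1],
    ![1, -1, -1, 1],
    ![1, -1, 1, -1],
    ![1, -1, 1, -1],
    ![1, -1, -1, 1],
    ![1, -1, -1, 1],
    ![1, -1, 1, -1],
    ![1, -1, -1, 1],
    ![1, -1, 1, -1],
    ![1, -1, 1, -1],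
    ![-1, 1, 1, -1],
    ![-1, 1, 1, -1],
    ![-1, 1, -1, 1],
    ![-1, 1, 1, -1],
    ![-1, 1, -1, 1],
    ![-1, 1, -1, 1],
    ![-1, 1, 1, -1],
    ![-1, 1, 1, -1],
    ![-1, 1, -1, 1],
    ![-1, 1, 1, -1],
    ![-1, 1, -1, 1],
    ![-1, 1, -1, 1],
    ![1, -1, -1, 1],
    ![1, -1, -1, 1],
    ![1, -1, 1, -1],
    ![1, -1, -1, 1],
    ![1, -1, 1, -1],
    ![1, -1, 1, -1],
    ![1, -1, -1, 1],
    ![1, -1, -1, 1],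
    ![1, -1, 1, -1],
    ![1, -1, -1, 1],
    ![1, -1, 1, -1],
    ![1, -1, 1, -1],
    ![-1, 1, 1, -1],
    ![-1, 1, 1, -1],
    ![-1, 1, -1, 1],
    ![-1, 1, 1, -1],
    ![-1, 1, -1, 1],
    ![-1, 1, -1, 1],
    ![-1, 1, 1, -1],
    ![-1, 1, 1, -1],
    ![-1, 1, -1, 1],
    ![-1, 1, 1, -1],
    ![-1, 1, -1, 1],
    ![-1, 1, -1, 1],
    ![-1, 1, 1, -1],
    ![-1, 1, 1, -1],
    ![-1, 1, -1, 1],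
    ![-1, 1, 1, -1],
    ![-1, 1, -1, 1],
    ![-1, 1, -1, 1],
    ![1, -1, -1, 1],
    ![1, -1, -1, 1],
    ![1, -1, 1, -1],
    ![1, -1, -1, 1],
    ![1, -1, 1, -1],
    ![1, -1, 1, -1],
    ![-1, 1, 1, -1],
    ![-1, 1, 1, -1],
    ![-1, 1, -1, 1],
    ![-1, 1, 1, -1],
    ![-1, 1, -1, 1],
    ![-1, 1, -1, 1],
    ![-1, 1, 1, -1],
    ![-1, 1, 1, -1],
    ![-1, 1, -1, 1],
    ![-1, 1, 1, -1],
    ![-1, 1, -1, 1],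
    ![-1, 1, -1, 1],
    ![-1, 1, 1, -1],
    ![-1, 1, 1, -1],
    ![-1, 1, -1, 1],
    ![-1, 1, 1, -1],
    ![-1, 1, -1, 1],
    ![-1, 1, -1, 1],
    ![-1, 1, 1, -1],
    ![-1, 1, 1, -1],
    ![-1, 1, -1, 1],
    ![-1, 1, 1, -1],
    ![-1, 1, -1, 1],
    ![-1, 1, -1, 1]]

/-- The coefficient vectors (in normal form) of the 120 permuted ternary derivation
identities. -/
def gens18 (r : Fin 120) : Fin 90 → ℂ :=
  ∑ t : Fin 4, Pi.single (gIdx18 r t) (gSgn18 r t)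

/-! ### The operators `β(a, b)` are derivations of the operation -/

theorem tri_add_left (x x' y z : M7) : tri (x + x') y z = tri x y z + tri x' y z := by
  ext k; fin_cases k <;> simp [tri, cE, cH, cF, dd, Em, Hm, Fm] <;> ring

theorem tri_smul_left (c : ℂ) (x y z : M7) : tri (c • x) y z = c • tri x y z := by
  ext k; fin_cases k <;> simp [tri, cE, cH, cF, dd, Em, Hm, Fm] <;> ring

theorem tri_skew (x y z : M7) : tri x y z = -tri y x z := by
  ext k; fin_cases k <;> simp [tri, cE, cH, cF, dd, Em, Hm, Fm] <;> ring

theorem tri_add_mid (x y y' z : M7) : tri x (y + y') z = tri x y z + tri x y' z := by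
  rw [tri_skew, tri_add_left, tri_skew y, tri_skew y']; abel

theorem tri_smul_mid (c : ℂ) (x y z : M7) : tri x (c • y) z = c • tri x y z := by
  rw [tri_skew, tri_smul_left, tri_skew y]; simp

theorem tri_add_right (x y z z' : M7) : tri x y (z + z') = tri x y z + tri x y z' := by
  ext k; fin_cases k <;> simp [tri, Em, Hm, Fm] <;> ring

theorem tri_smul_right (c : ℂ) (x y z : M7) : tri x y (c • z) = c • tri x y z := by
  ext k; fin_cases k <;> simp [tri, Em, Hm, Fm] <;> ring

theorem tri_zero_left (y z : M7) : tri 0 y z = 0 := by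
  simpa using tri_smul_left 0 0 y z

theorem tri_zero_right (x y : M7) : tri x y 0 = 0 := by
  simpa using tri_smul_right 0 x y 0

/-- Invariance of `(·,·,·)` under `E`, i.e. equivariance of `β` together with the representation
property of the action. -/
theorem Em_tri (x y z : M7) :
    Em (tri x y z) = tri (Em x) y z + tri x (Em y) z + tri x y (Em z) := by
  ext k; fin_cases k <;> simp [tri, cE, cH, cF, dd, Em, Hm, Fm] <;> ring

theorem Hm_tri (x y z : M7) :
    Hm (tri x y z) = tri (Hm x) y z + tri x (Hm y) z + tri x y (Hm z) := by
  ext k; fin_cases k <;> simp [tri, cE, cH, cF, dd, Em, Hm, Fm] <;> ring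

theorem Fm_tri (x y z : M7) :
    Fm (tri x y z) = tri (Fm x) y z + tri x (Fm y) z + tri x y (Fm z) := by
  ext k; fin_cases k <;> simp [tri, cE, cH, cF, dd, Em, Hm, Fm] <;> ring

/-- `w ↦ (a, b, w)` is a derivation of `(·,·,·)`, being a linear combination of the derivations
`E`, `H`, `F`. -/
theorem tri_deriv (a b x y z : M7) :
    tri a b (tri x y z) = tri (tri a b x) y z + tri x (tri a b y) z + tri x y (tri a b z) := by
  have h (w : M7) : tri a b w = cE a b • Em w + cH a b • Hm w + cF a b • Fm w := rfl
  rw [h, h x, h y, h z, Em_tri, Hm_tri, Fm_tri]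
  simp only [tri_add_left, tri_add_mid, tri_add_right, tri_smul_left, tri_smul_mid,
    tri_smul_right, smul_add]
  abel

theorem derivation_identity (a b c d e : M7) :
    tri (tri a b c) d e - tri (tri a b d) c e - tri a b (tri c d e) + tri c d (tri a b e) = 0 := by
  rw [tri_deriv a b c d e, tri_skew c (tri a b d) e]; abel

/-- The ternary derivation identity with the roles of `c` and `d` in the pair `(c, d)` rewritten by
skew-symmetry: the normal form needed when the fourth variable precedes the third. -/
theorem derivation_identity_swap (a b c d e : M7) :
    tri (tri a b c) d e - tri (tri a b d) c e + tri a b (tri d c e) - tri d c (tri a b e) = 0 := by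
  rw [tri_deriv a b d c e, tri_skew d (tri a b c) e]; abel

theorem Phi18_apply (f : Fin 90 → ℂ) (a b c d e : M7) :
    Phi18 f a b c d e = ∑ i, f i • mono18 i a b c d e := by
  simp [Phi18, LinearMap.sum_apply, Finset.sum_apply]

theorem Phi18_gens (r : Fin 120) (a b c d e : M7) :
    Phi18 (gens18 r) a b c d e = ∑ t, gSgn18 r t • mono18 (gIdx18 r t) a b c d e := by
  rw [gens18, map_sum]
  simp only [Finset.sum_apply]
  refine Finset.sum_congr rfl fun t _ => ?_
  rw [Phi18_apply, Finset.sum_eq_single (gIdx18 r t)]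
  · simp
  · intro j _ hj; simp [Pi.single_eq_of_ne hj]
  · simp


/-! ### The permuted derivation identities vanish on `M` -/

/-- The order in which the variables occur in each normal-form monomial: `abcde` read as `01234`
and written as a decimal numeral. The first 60 entries belong to monomials `((·,·,·),·,·)`, the other
30 to monomials `(·,·,(·,·,·))`; both lists are lexicographic. -/
def code : Fin 90 → ℕ :=
  ![
    1234, 1243, 1324, 1342, 1423, 1432, 2134, 2143, 2314, 2341, 2413, 2431, 3124, 3142, 3214,
    3241, 3412, 3421, 4123, 4132, 4213, 4231, 4312, 4321, 12034, 12043, 12304, 12340, 12403, 12430,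
    13024, 13042, 13204, 13240, 13402, 13420, 14023, 14032, 14203, 14230, 14302, 14320, 23014, 23041, 23104,
    23140, 23401, 23410, 24013, 24031, 24103, 24130, 24301, 24310, 34012, 34021, 34102, 34120, 34201, 34210,
    1234, 1243, 1342, 2134, 2143, 2341, 3124, 3142, 3241, 4123, 4132, 4231, 12034, 12043, 12340,
    13024, 13042, 13240, 14023, 14032, 14230, 23014, 23041, 23140, 24013, 24031, 24130, 34012, 34021, 34120]

/-- The variable in place `j` of the monomial `i`. -/
def dg (i : Fin 90) (j : ℕ) : ℕ := code i / 10 ^ (4 - j) % 10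

/-- The monomial `i` evaluated at the variables `x 0, …, x 4`. -/
def word (x : ℕ → M7) (i : Fin 90) : M7 :=
  if i.val < 60 then tri (tri (x (dg i 0)) (x (dg i 1)) (x (dg i 2))) (x (dg i 3)) (x (dg i 4))
  else tri (x (dg i 0)) (x (dg i 1)) (tri (x (dg i 2)) (x (dg i 3)) (x (dg i 4)))

set_option maxRecDepth 8000 in
theorem mono18_eq_word (x : ℕ → M7) (i : Fin 90) :
    mono18 i (x 0) (x 1) (x 2) (x 3) (x 4) = word x i := by
  fin_cases i <;> rfl

/-- The possible sign patterns of a permuted identity in normal form: the first argument tells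
whether `σa < σb`, the second whether `σc < σd`. -/
def sgnVec : Bool → Bool → Fin 4 → ℂ
  | true, true => ![1, -1, -1, 1]
  | true, false => ![1, -1, 1, -1]
  | false, true => ![-1, 1, 1, -1]
  | false, false => ![-1, 1, -1, 1]

/-- Whether the `r`-th permutation in lexicographic order satisfies `σa < σb`: here `r / 24` is
`σa`, and `r % 24 / 6` is the rank of `σb` among the four remaining variables. -/
def posAB (r : Fin 120) : Bool := decide (r.val / 24 ≤ r.val % 24 / 6)

/-- Whether the `r`-th permutation in lexicographic order satisfies `σc < σd`: these are the
places `0`, `1`, `3` in the lexicographic list of the six arrangements of three letters. -/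
def posCD (r : Fin 120) : Bool := r.val % 6 == 0 || r.val % 6 == 1 || r.val % 6 == 3

set_option maxRecDepth 8000 in
theorem gSgn18_eq (r : Fin 120) : gSgn18 r = sgnVec (posAB r) (posCD r) := by
  fin_cases r <;> rfl

/-- The variables of the monomial `i` occur in the order `p, q, r, s, t`. -/
def HasDigits (i : Fin 90) (p q r s t : ℕ) : Prop :=
  dg i 0 = p ∧ dg i 1 = q ∧ dg i 2 = r ∧ dg i 3 = s ∧ dg i 4 = t

instance (i : Fin 90) (p q r s t : ℕ) : Decidable (HasDigits i p q r s t) :=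
  inferInstanceAs (Decidable (_ ∧ _))

/-- The four monomials `i 0, …, i 3` are the normal forms of the terms of a derivation identity whose
first term is `i 0`; `pos` records whether `σc < σd`. -/
def RowShape (i : Fin 4 → Fin 90) (pos : Bool) : Prop :=
  ((i 0).val < 60 ∧ (i 1).val < 60 ∧ ¬ (i 2).val < 60 ∧ ¬ (i 3).val < 60) ∧
  HasDigits (i 1) (dg (i 0) 0) (dg (i 0) 1) (dg (i 0) 3) (dg (i 0) 2) (dg (i 0) 4) ∧
  bif pos then
    HasDigits (i 2) (dg (i 0) 0) (dg (i 0) 1) (dg (i 0) 2) (dg (i 0) 3) (dg (i 0) 4) ∧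
    HasDigits (i 3) (dg (i 0) 2) (dg (i 0) 3) (dg (i 0) 0) (dg (i 0) 1) (dg (i 0) 4)
  else
    HasDigits (i 2) (dg (i 0) 0) (dg (i 0) 1) (dg (i 0) 3) (dg (i 0) 2) (dg (i 0) 4) ∧
    HasDigits (i 3) (dg (i 0) 3) (dg (i 0) 2) (dg (i 0) 0) (dg (i 0) 1) (dg (i 0) 4)

instance (i : Fin 4 → Fin 90) : (pos : Bool) → Decidable (RowShape i pos)
  | true => inferInstanceAs (Decidable (_ ∧ _ ∧ _ ∧ _))
  | false => inferInstanceAs (Decidable (_ ∧ _ ∧ _ ∧ _))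

theorem rowShape (r : Fin 120) : RowShape (gIdx18 r) (posCD r) := by
  revert r; decide +kernel

theorem gens_mem_ker (r : Fin 120) : gens18 r ∈ LinearMap.ker Phi18 := by
  rw [LinearMap.mem_ker]
  funext a b c d e
  change _ = (0 : M7)
  rw [Phi18_gens, Fin.sum_univ_four, gSgn18_eq]
  obtain ⟨x, rfl, rfl, rfl, rfl, rfl⟩ :
      ∃ x : ℕ → M7, x 0 = a ∧ x 1 = b ∧ x 2 = c ∧ x 3 = d ∧ x 4 = e :=
    ⟨fun n => ![a, b, c, d, e] (Fin.ofNat 5 n), rfl, rfl, rfl, rfl, rfl⟩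
  simp only [mono18_eq_word]
  have h := rowShape r
  generalize gIdx18 r = i at h ⊢
  generalize posAB r = s
  generalize posCD r = t at h ⊢
  cases t
  · obtain ⟨⟨h0, h1, h2, h3⟩, ⟨a0, a1, a2, a3, a4⟩, ⟨b0, b1, b2, b3, b4⟩,
      ⟨c0, c1, c2, c3, c4⟩⟩ := h
    have key := derivation_identity_swap (x (dg (i 0) 0)) (x (dg (i 0) 1)) (x (dg (i 0) 2))
      (x (dg (i 0) 3)) (x (dg (i 0) 4))
    simp only [word, h0, h1, h2, h3, if_true, if_false, a0, a1, a2, a3, a4, b0, b1, b2, b3, b4,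
      c0, c1, c2, c3, c4]
    cases s <;> simp only [sgnVec, Matrix.cons_val]
    · linear_combination (norm := module) (-1 : ℂ) • key
    · linear_combination (norm := module) (1 : ℂ) • key
  · obtain ⟨⟨h0, h1, h2, h3⟩, ⟨a0, a1, a2, a3, a4⟩, ⟨b0, b1, b2, b3, b4⟩,
      ⟨c0, c1, c2, c3, c4⟩⟩ := h
    have key := derivation_identity (x (dg (i 0) 0)) (x (dg (i 0) 1)) (x (dg (i 0) 2))
      (x (dg (i 0) 3)) (x (dg (i 0) 4))
    simp only [word, h0, h1, h2, h3, if_true, if_false, a0, a1, a2, a3, a4, b0, b1, b2, b3, b4,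
      c0, c1, c2, c3, c4]
    cases s <;> simp only [sgnVec, Matrix.cons_val]
    · linear_combination (norm := module) (-1 : ℂ) • key
    · linear_combination (norm := module) (1 : ℂ) • key

/-! ### Linear independence of thirty of the identities -/

/-- The identities with `σa < σb` and `σc < σd`, listed by the lexicographic rank of `σ`; up to sign every
identity is one of these. -/
def rep : Fin 30 → Fin 120 :=
  ![0, 1, 3, 6, 7, 9, 12, 13, 15, 18, 19, 21, 30, 31, 33, 36, 37, 39, 42, 43, 45, 60, 61, 63, 66, 67, 69, 90, 91, 93]

/-- The leading monomial `((σa,σb,σc),σd,σe)` of the `k`-th chosen identity; it occurs in no other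
chosen identity. -/
def lead (k : Fin 30) : Fin 90 := gIdx18 (rep k) 0

theorem gens18_lead (k l : Fin 30) : gens18 (rep k) (lead l) = if k = l then 1 else 0 := by
  have hs : gSgn18 (rep k) 0 = 1 := by
    have hk : ∀ k, posAB (rep k) = true ∧ posCD (rep k) = true := by decide +kernel
    rw [gSgn18_eq, (hk k).1, (hk k).2]
    rfl
  have h1 : ∀ k l : Fin 30, (lead l = gIdx18 (rep k) 0 ↔ k = l) ∧ lead l ≠ gIdx18 (rep k) 1 ∧
      lead l ≠ gIdx18 (rep k) 2 ∧ lead l ≠ gIdx18 (rep k) 3 := by decide +kernel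
  obtain ⟨h0, h1, h2, h3⟩ := h1 k l
  simp [gens18, Fin.sum_univ_four, Pi.single_apply, h0, h1, h2, h3, hs]

theorem linearIndependent_gens : LinearIndependent ℂ (fun k => gens18 (rep k)) := by
  rw [Fintype.linearIndependent_iff]
  intro g hg l
  have := congrFun hg (lead l)
  simpa [Finset.sum_apply, gens18_lead] using this

/-! ### Monomials evaluated at weight vectors -/

/-- The weight vectors of `M`: `bv n` is the `n`-th basis vector for `n < 7`, and `0` for `n ≥ 7`. -/
def bv (n : ℕ) : M7 := fun k => if k.val = n then 1 else 0

/-- The coefficient of `β(bv p, bv (w - p))` with respect to `E`, `H`, `F` for `w = 5, 6, 7`; for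
every other `w` this value of `β` is zero. -/
def wt : ℕ → ℕ → ℤ
  | 5, p => [-2, 10, -20, 20, -10, 2].getD p 0
  | 6, p => [1, -4, 5, 0, -5, 4, -1].getD p 0
  | 7, p => [0, 2, -10, 20, -20, 10, -2].getD p 0
  | _, _ => 0

/-- The scalar by which `E`, `H`, `F` (for `w = 5, 6, 7`) send `bv r` to `bv (w + r - 6)`. The
zeros at `w = 5, r = 0` and `w = 7, r = 6` make the truncated or out-of-range index harmless. -/
def ac : ℕ → ℕ → ℤ
  | 5, 0 => 0
  | 5, r => 7 - r
  | 6, r => 6 - 2 * r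
  | 7, 6 => 0
  | 7, r => r + 1
  | _, _ => 0

/-- The structure constant of `(·,·,·)` on weight vectors. -/
def T (p q r : ℕ) : ℤ := wt (p + q) p * ac (p + q) r

theorem cE_bv (p q : ℕ) (hp : p < 7) (hq : q < 7) :
    cE (bv p) (bv q) = ((if p + q = 5 then wt 5 p else 0 : ℤ) : ℂ) := by
  interval_cases p <;> interval_cases q <;> simp [cE, dd, bv, wt]

theorem cH_bv (p q : ℕ) (hp : p < 7) (hq : q < 7) :
    cH (bv p) (bv q) = ((if p + q = 6 then wt 6 p else 0 : ℤ) : ℂ) := by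
  interval_cases p <;> interval_cases q <;> simp [cH, dd, bv, wt]

theorem cF_bv (p q : ℕ) (hp : p < 7) (hq : q < 7) :
    cF (bv p) (bv q) = ((if p + q = 7 then wt 7 p else 0 : ℤ) : ℂ) := by
  interval_cases p <;> interval_cases q <;> simp [cF, dd, bv, wt]

theorem Em_bv (r : ℕ) (hr : r < 7) : Em (bv r) = (ac 5 r : ℂ) • bv (5 + r - 6) := by
  ext k
  interval_cases r <;> fin_cases k <;> simp [Em, bv, ac]

theorem Hm_bv (r : ℕ) (hr : r < 7) : Hm (bv r) = (ac 6 r : ℂ) • bv (6 + r - 6) := by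
  ext k
  interval_cases r <;> fin_cases k <;> simp [Hm, bv, ac]

theorem Fm_bv (r : ℕ) (hr : r < 7) : Fm (bv r) = (ac 7 r : ℂ) • bv (7 + r - 6) := by
  ext k
  interval_cases r <;> fin_cases k <;> simp [Fm, bv, ac]

theorem tri_bv (p q r : ℕ) (hp : p < 7) (hq : q < 7) (hr : r < 7) :
    tri (bv p) (bv q) (bv r) = (T p q r : ℂ) • bv (p + q + r - 6) := by
  rw [tri, cE_bv p q hp hq, cH_bv p q hp hq, cF_bv p q hp hq, Em_bv r hr, Hm_bv r hr, Fm_bv r hr,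
    T]
  by_cases h5 : p + q = 5
  · simp [h5, smul_smul]
  by_cases h6 : p + q = 6
  · simp [h6, smul_smul]
  by_cases h7 : p + q = 7
  · simp [h7, smul_smul]
  have : wt (p + q) p = 0 := by
    unfold wt; split <;> first | contradiction | rfl
  simp [h5, h6, h7, this]

theorem T_range (p q r : ℕ) (hp : p < 7) (hq : q < 7) (hr : r < 7) (h : T p q r ≠ 0) :
    p + q + r - 6 < 7 := by
  have key : ∀ p q r : Fin 7, T p q r ≠ 0 → (p + q + r - 6 : ℕ) < 7 := by decide +kernel
  exact key ⟨p, hp⟩ ⟨q, hq⟩ ⟨r, hr⟩ h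

/-- The value of the monomial `j` at the weight vectors `bv (t 0), …, bv (t 4)`, which is a multiple
of a single weight vector: the scalar and the index of that vector. -/
def V (j : Fin 90) (t : ℕ → Fin 7) : ℤ × ℕ :=
  let a := (t (dg j 0)).val
  let b := (t (dg j 1)).val
  let c := (t (dg j 2)).val
  let d := (t (dg j 3)).val
  let e := (t (dg j 4)).val
  if j.val < 60 then (T a b c * T (a + b + c - 6) d e, a + b + c - 6 + d + e - 6)
  else (T c d e * T a b (c + d + e - 6), a + b + (c + d + e - 6) - 6)

theorem word_bv (j : Fin 90) (t : ℕ → Fin 7) :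
    word (fun v => bv (t v)) j = ((V j t).1 : ℂ) • bv (V j t).2 := by
  unfold word V
  split_ifs
  · by_cases h : T (t (dg j 0)) (t (dg j 1)) (t (dg j 2)) = 0
    · simp [tri_bv, h, tri_zero_left]
    · have := T_range _ _ _ (by simp) (by simp) (by simp) h
      simp [tri_bv, tri_smul_left, this, smul_smul]
  · by_cases h : T (t (dg j 2)) (t (dg j 3)) (t (dg j 4)) = 0
    · simp [tri_bv, h, tri_zero_right]
    · have := T_range _ _ _ (by simp) (by simp) (by simp) h
      simp [tri_bv, tri_smul_right, this, smul_smul]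

/-! ### Coordinates of an element of the kernel -/

/-- The substitution that puts the weight vectors `s 0, …, s 4` into the variables of the monomial `i`
in their order of occurrence. -/
def place (i : Fin 90) (s : Fin 5 → Fin 7) (v : ℕ) : Fin 7 :=
  if v = dg i 0 then s 0 else if v = dg i 1 then s 1 else if v = dg i 2 then s 2
  else if v = dg i 3 then s 3 else s 4

/-- Coefficients and weight vectors for a combination of evaluations that isolates, up to leading
coordinates, 1920 times the coefficient of the monomial `i`. It is used for non-leading `i` only. By
symmetry in the variables a single recipe per type of monomial suffices; the recipes were found by
linear algebra over `ℚ`. -/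
def cert (i : Fin 90) : List (ℤ × (Fin 5 → Fin 7)) :=
  if i.val < 60 then [(-2, ![5, 0, 3, 3, 1])]
  else [(-1, ![1, 6, 3, 3, 5]), (-20, ![6, 1, 5, 0, 3]), (-6, ![3, 3, 6, 1, 0]),
    (8, ![0, 6, 3, 2, 4]), (-20, ![1, 6, 5, 3, 0]), (6, ![6, 0, 2, 3, 3]), (6, ![1, 6, 3, 0, 3])]

/-- The index of the weight vector on which every nonzero value of a monomial at `s` lies. -/
def target (s : Fin 5 → Fin 7) : Fin 7 := Fin.ofNat 7 (s 0 + s 1 + s 2 + s 3 + s 4 - 12)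

/-- The contribution of the coefficient of the monomial `j` to one evaluation in `cert i`. -/
def contrib (i j : Fin 90) (cs : ℤ × (Fin 5 → Fin 7)) : ℤ :=
  if (V j (place i cs.2)).2 = target cs.2 then cs.1 * (V j (place i cs.2)).1 else 0

theorem sum_contrib_eq_zero {f : Fin 90 → ℂ} (hf : Phi18 f = 0) (i : Fin 90)
    (cs : ℤ × (Fin 5 → Fin 7)) : ∑ j, f j * (contrib i j cs : ℂ) = 0 := by
  have h := congrFun (Phi18_apply f (bv (place i cs.2 0)) (bv (place i cs.2 1))
    (bv (place i cs.2 2)) (bv (place i cs.2 3)) (bv (place i cs.2 4))) (target cs.2)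
  rw [hf] at h
  simp only [fun j => mono18_eq_word (fun v => bv (place i cs.2 v)) j, word_bv] at h
  simp only [Pi.zero_apply, Finset.sum_apply, Pi.smul_apply, smul_eq_mul] at h
  rw [← mul_zero (cs.1 : ℂ), h, Finset.mul_sum]
  refine Finset.sum_congr rfl fun j _ => ?_
  unfold contrib bv
  by_cases hj : (V j (place i cs.2)).2 = target cs.2
  · simp [hj]; ring
  · simp [hj, Ne.symm hj]

theorem sum_cert_eq_zero {f : Fin 90 → ℂ} (hf : Phi18 f = 0) (i : Fin 90) :
    ∑ j, f j * (((cert i).map (contrib i j)).sum : ℂ) = 0 := by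
  induction cert i with
  | nil => simp
  | cons cs L ih =>
    simp only [List.map_cons, List.sum_cons, Int.cast_add, mul_add, Finset.sum_add_distrib, ih,
      sum_contrib_eq_zero hf, add_zero]

/-- The monomial `i` is of the form `((p,q,r),s,t)` with `r < s`. -/
def IsLead (i : Fin 90) : Prop := i.val < 60 ∧ dg i 2 < dg i 3

instance (i : Fin 90) : Decidable (IsLead i) := inferInstanceAs (Decidable (_ ∧ _))

theorem exists_lead (i : Fin 90) (h : IsLead i) : ∃ k, lead k = i := by
  revert i; decide +kernel

/-- On non-leading coordinates the recipe `cert i` reads off exactly `1920` times the `i`-th one. -/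
theorem cert_spec (i j : Fin 90) (hi : ¬ IsLead i) (hj : ¬ IsLead j) :
    ((cert i).map (contrib i j)).sum = if i = j then 1920 else 0 := by
  revert i j; decide +kernel

/-- An element of the kernel is determined by its thirty leading coordinates. -/
theorem eq_zero_of_lead {f : Fin 90 → ℂ} (hf : Phi18 f = 0) (h : ∀ k, f (lead k) = 0) : f = 0 := by
  funext i
  by_cases hi : IsLead i
  · obtain ⟨k, rfl⟩ := exists_lead i hi
    exact h k
  · have := sum_cert_eq_zero hf i
    rw [Finset.sum_eq_single i] at this
    · simpa [cert_spec i i hi hi] using this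
    · intro j _ hj
      by_cases hl : IsLead j
      · obtain ⟨k, rfl⟩ := exists_lead j hl
        simp [h k]
      · simp [cert_spec i j hi hl, Ne.symm hj]
    · simp

/-- The space of coefficient vectors in `ℂ⁹⁰` whose corresponding linear combination of
the 90 normal-form ternary monomials vanishes identically on `M⁵` has dimension 30,
and is spanned by the coefficient vectors of the permuted ternary derivation identities. -/
theorem degree5_ternary_identities_of_M :
    Module.finrank ℂ (LinearMap.ker Phi18) = 30 ∧
    LinearMap.ker Phi18 = Submodule.span ℂ (Set.range gens18) := by
  -- Restriction to the leading coordinates embeds the kernel into `ℂ³⁰`.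
  have hle : Module.finrank ℂ (LinearMap.ker Phi18) ≤ 30 := by
    have := LinearMap.finrank_le_finrank_of_injective
      (f := (LinearMap.funLeft ℂ ℂ lead).comp (LinearMap.ker Phi18).subtype) <| by
        rw [← LinearMap.ker_eq_bot, LinearMap.ker_eq_bot']
        rintro ⟨f, hf⟩ h
        refine Subtype.ext (eq_zero_of_lead (LinearMap.mem_ker.1 hf) fun k => ?_)
        have hk := congrFun h k
        rwa [LinearMap.comp_apply, LinearMap.funLeft_apply, Submodule.subtype_apply] at hk
    simpa using this
  have hspan : Submodule.span ℂ (Set.range gens18) ≤ LinearMap.ker Phi18 := by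
    rw [Submodule.span_le]; rintro _ ⟨r, rfl⟩; exact gens_mem_ker r
  have hge : 30 ≤ Module.finrank ℂ (Submodule.span ℂ (Set.range gens18)) := by
    have h := finrank_span_eq_card linearIndependent_gens
    rw [Fintype.card_fin] at h
    rw [← h]
    refine Submodule.finrank_mono (Submodule.span_mono ?_)
    rintro _ ⟨k, rfl⟩; exact ⟨rep k, rfl⟩
  have heq := Submodule.eq_of_le_of_finrank_le hspan (hle.trans hge)
  exact ⟨le_antisymm hle (heq ▸ hge), heq.symm⟩

end
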